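/- arXiv:2509.00743 — 5 statements merged into one kernel-verified Lean document; each statement's English description precedes it below -/
import Mathlib

section
/- Let p and q be real numbers with 0 < p and 0 < q, and let b, c be real numbers such that ξ₁·ξ₂·ξ₃·ξ₄ ≠ 0, where ξ₁ = 1 − pb − qc, ξ₂ = 1 − pb + qc, ξ₃ = 1 + pb + qc, ξ₄ = 1 + pb − qc. Then the total Tanaka–Webster scalar curvature factors through the volume: 2q/(ξ₁ξ₂) + 2p/(ξ₂ξ₃) + 2q/(ξ₃ξ₄) + 2p/(ξ₄ξ₁) = (1/p + 1/q + b²·(p − p²/q) + c²·(q − q²/p)) · 4pq/(ξ₁ξ₂ξ₃ξ₄), i.e. S(ξ) = h(b,c)·V(ξ). Consequently, whenever V(ξ) > 0, the Einstein–Hilbert functional satisfies EH(ξ) = S(ξ)/V(ξ)^{2/3} = h(b,c)·V(ξ)^{1/3}. -/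
/-- toric computation of the Einstein–Hilbert functional on the
Sasaki–Reeb cone of the circle bundle over ℙ¹×ℙ¹: the total Tanaka–Webster
scalar curvature `S(ξ)` factors as `h(b,c) · V(ξ)`, and consequently
`EH(ξ) = S(ξ)/V(ξ)^{2/3} = h(b,c) · V(ξ)^{1/3}` whenever `V(ξ) > 0`. -/
theorem stmt0 (p q b c : ℝ) (hp : 0 < p) (hq : 0 < q)
    (ξ1 ξ2 ξ3 ξ4 : ℝ)
    (hξ1 : ξ1 = 1 - p * b - q * c) (hξ2 : ξ2 = 1 - p * b + q * c)
    (hξ3 : ξ3 = 1 + p * b + q * c) (hξ4 : ξ4 = 1 + p * b - q * c)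
    (hne : ξ1 * ξ2 * ξ3 * ξ4 ≠ 0) :
    (2 * q / (ξ1 * ξ2) + 2 * p / (ξ2 * ξ3) + 2 * q / (ξ3 * ξ4) + 2 * p / (ξ4 * ξ1)
      = (1 / p + 1 / q + b ^ 2 * (p - p ^ 2 / q) + c ^ 2 * (q - q ^ 2 / p))
          * (4 * p * q / (ξ1 * ξ2 * ξ3 * ξ4)))
    ∧ (0 < 4 * p * q / (ξ1 * ξ2 * ξ3 * ξ4) →
        (2 * q / (ξ1 * ξ2) + 2 * p / (ξ2 * ξ3) + 2 * q / (ξ3 * ξ4) + 2 * p / (ξ4 * ξ1))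
            / (4 * p * q / (ξ1 * ξ2 * ξ3 * ξ4)) ^ ((2 : ℝ) / 3)
          = (1 / p + 1 / q + b ^ 2 * (p - p ^ 2 / q) + c ^ 2 * (q - q ^ 2 / p))
              * (4 * p * q / (ξ1 * ξ2 * ξ3 * ξ4)) ^ ((1 : ℝ) / 3)) := by
  have h12 : ξ1 * ξ2 * ξ3 ≠ 0 := left_ne_zero_of_mul hne
  have h4 : ξ4 ≠ 0 := right_ne_zero_of_mul hne
  have h3 : ξ3 ≠ 0 := right_ne_zero_of_mul h12
  have h2 : ξ2 ≠ 0 := right_ne_zero_of_mul (left_ne_zero_of_mul h12)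
  have h1 : ξ1 ≠ 0 := left_ne_zero_of_mul (left_ne_zero_of_mul h12)
  have key : 2 * q / (ξ1 * ξ2) + 2 * p / (ξ2 * ξ3) + 2 * q / (ξ3 * ξ4) + 2 * p / (ξ4 * ξ1)
      = (1 / p + 1 / q + b ^ 2 * (p - p ^ 2 / q) + c ^ 2 * (q - q ^ 2 / p))
          * (4 * p * q / (ξ1 * ξ2 * ξ3 * ξ4)) := by
    have hL : 2 * q / (ξ1 * ξ2) + 2 * p / (ξ2 * ξ3) + 2 * q / (ξ3 * ξ4) + 2 * p / (ξ4 * ξ1)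
        = (2 * q * (ξ3 * ξ4 + ξ1 * ξ2) + 2 * p * (ξ1 * ξ4 + ξ2 * ξ3))
          / (ξ1 * ξ2 * ξ3 * ξ4) := by
      field_simp
      ring
    rw [hL, ← mul_div_assoc]
    congr 1
    rw [hξ1, hξ2, hξ3, hξ4]
    field_simp
    ring
  refine ⟨key, fun hV => ?_⟩
  rw [key]
  generalize 4 * p * q / (ξ1 * ξ2 * ξ3 * ξ4) = V at hV
  rw [div_eq_iff (Real.rpow_pos_of_pos hV _).ne', mul_assoc, ← Real.rpow_add hV]
  norm_num
end

section
/- Let p and q be real numbers with 0 < p and 5p < q, and set b₀ = (1/p)·√((q−5p)/(5(q−p))), ξ₀ = (1,0,0) and ξ± = (1, ±b₀, 0). Then V(ξ₀) = 4pq and V(ξ₊) = V(ξ₋) = 4pq · 25(q−p)²/(16q²) = 25p(q−p)²/(4q), and moreover V(ξ₀) < V(ξ±). -/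
/-- Product of the values of the affine function `ξ(x,y) = 1 + bx + cy` at the four
vertices `(−p,−q), (−p,q), (p,q), (p,−q)` of the moment rectangle. -/
def xiProd (p q b c : ℝ) : ℝ :=
  (1 - p * b - q * c) * (1 - p * b + q * c) * (1 + p * b + q * c) * (1 + p * b - q * c)

/-- Total volume `V(ξ) = 4pq/(ξ₁ξ₂ξ₃ξ₄)` of the Sasaki structure with Reeb vector
`ξ = (1, b, c)`. -/
noncomputable def sasakiVol (p q b c : ℝ) : ℝ := 4 * p * q / xiProd p q b c

/-- for `0 < p`, `5p < q` and `b₀ = (1/p)·√((q−5p)/(5(q−p)))`, the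
volumes of the Sasaki structures with Reeb vectors `ξ₀ = (1,0,0)` and
`ξ± = (1, ±b₀, 0)` satisfy `V(ξ₀) = 4pq`,
`V(ξ₊) = V(ξ₋) = 4pq · 25(q−p)²/(16q²) = 25p(q−p)²/(4q)`, and `V(ξ₀) < V(ξ±)`. -/
theorem stmt2 (p q : ℝ) (hp : 0 < p) (hq : 5 * p < q)
    (b₀ : ℝ) (hb₀ : b₀ = (1 / p) * Real.sqrt ((q - 5 * p) / (5 * (q - p)))) :
    sasakiVol p q 0 0 = 4 * p * q ∧
    sasakiVol p q b₀ 0 = sasakiVol p q (-b₀) 0 ∧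
    sasakiVol p q b₀ 0 = 4 * p * q * (25 * (q - p) ^ 2 / (16 * q ^ 2)) ∧
    sasakiVol p q b₀ 0 = 25 * p * (q - p) ^ 2 / (4 * q) ∧
    sasakiVol p q 0 0 < sasakiVol p q b₀ 0 := by
  have hqp : 0 < q - p := by linarith
  have hq0 : 0 < q := by linarith
  have hsq : (p * b₀) ^ 2 = (q - 5 * p) / (5 * (q - p)) := by
    have h1 : p * b₀ = Real.sqrt ((q - 5 * p) / (5 * (q - p))) := by
      rw [hb₀]
      field_simp
    rw [h1, Real.sq_sqrt]
    exact div_nonneg (by linarith) (by linarith)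
  have hprod : xiProd p q b₀ 0 = 16 * q ^ 2 / (25 * (q - p) ^ 2) := by
    have h2 : xiProd p q b₀ 0 = (1 - (p * b₀) ^ 2) ^ 2 := by
      unfold xiProd
      ring
    rw [h2, hsq]
    have h3 : 1 - (q - 5 * p) / (5 * (q - p)) = 4 * q / (5 * (q - p)) := by
      field_simp
      ring
    rw [h3, div_pow]
    ring
  have h0 : sasakiVol p q 0 0 = 4 * p * q := by
    simp [sasakiVol, xiProd]
  have hV : sasakiVol p q b₀ 0 = 4 * p * q * (25 * (q - p) ^ 2 / (16 * q ^ 2)) := by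
    unfold sasakiVol
    rw [hprod, div_eq_mul_inv, inv_div]
  refine ⟨h0, ?_, hV, ?_, ?_⟩
  · have h4 : xiProd p q (-b₀) 0 = xiProd p q b₀ 0 := by
      unfold xiProd
      ring
    unfold sasakiVol
    rw [h4]
  · rw [hV]
    field_simp
    ring
  · rw [h0, hV]
    have h5 : 1 < 25 * (q - p) ^ 2 / (16 * q ^ 2) := by
      rw [one_lt_div (by positivity)]
      nlinarith
    exact lt_mul_of_one_lt_right (by positivity) h5
end

section
/- Let p and q be real numbers with 0 < p and 5p < q, set b₀ = (1/p)·√((q−5p)/(5(q−p))), ξ₀ = (1,0,0) and ξ₊ = (1, b₀, 0). Then the ratio of Einstein–Hilbert energies satisfies EH(ξ₊)/EH(ξ₀) = (1 + p²b₀²·(q−p)/(p+q)) · (25(q−p)²/(16q²))^{1/3}. -/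
/-- Total Tanaka–Webster scalar curvature
`S(ξ) = 2q/(ξ₁ξ₂) + 2p/(ξ₂ξ₃) + 2q/(ξ₃ξ₄) + 2p/(ξ₄ξ₁)`. -/
noncomputable def sasakiScal (p q b c : ℝ) : ℝ :=
  2 * q / ((1 - p * b - q * c) * (1 - p * b + q * c))
  + 2 * p / ((1 - p * b + q * c) * (1 + p * b + q * c))
  + 2 * q / ((1 + p * b + q * c) * (1 + p * b - q * c))
  + 2 * p / ((1 + p * b - q * c) * (1 - p * b - q * c))

/-- Einstein–Hilbert functional `EH(ξ) = S(ξ)/V(ξ)^{2/3}` on the Sasaki–Reeb cone. -/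
noncomputable def sasakiEH (p q b c : ℝ) : ℝ :=
  sasakiScal p q b c / (sasakiVol p q b c) ^ ((2 : ℝ) / 3)

/-- for `0 < p`, `5p < q` and `b₀ = (1/p)·√((q−5p)/(5(q−p)))`, the ratio
of Einstein–Hilbert energies of `ξ₊ = (1,b₀,0)` and `ξ₀ = (1,0,0)` is
`(1 + p²b₀²(q−p)/(p+q)) · (25(q−p)²/(16q²))^{1/3}`. -/
theorem stmt3 (p q : ℝ) (hp : 0 < p) (hq : 5 * p < q)
    (b₀ : ℝ) (hb₀ : b₀ = (1 / p) * Real.sqrt ((q - 5 * p) / (5 * (q - p)))) :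
    sasakiEH p q b₀ 0 / sasakiEH p q 0 0
      = (1 + p ^ 2 * b₀ ^ 2 * (q - p) / (p + q))
          * (25 * (q - p) ^ 2 / (16 * q ^ 2)) ^ ((1 : ℝ) / 3) := by
  have hqp : 0 < q - p := by linarith
  have hq0 : 0 < q := by linarith
  obtain ⟨t, ht⟩ : ∃ t, t = p * b₀ := ⟨_, rfl⟩
  have ht2 : t ^ 2 = (q - 5 * p) / (5 * (q - p)) := by
    have h1 : t = Real.sqrt ((q - 5 * p) / (5 * (q - p))) := by
      rw [ht, hb₀]; field_simp
    rw [h1, Real.sq_sqrt]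
    exact div_nonneg (by linarith) (by linarith)
  have hu : 1 - t ^ 2 = 4 * q / (5 * (q - p)) := by
    rw [ht2]; field_simp; ring
  have hupos : 0 < 1 - t ^ 2 := by rw [hu]; positivity
  obtain ⟨w, hw⟩ : ∃ w, w = (1 - t ^ 2) ^ 2 := ⟨_, rfl⟩
  have hwpos : 0 < w := by rw [hw]; positivity
  have hm : (1 - t) ≠ 0 := by
    intro h; have : 1 - t ^ 2 = (1 - t) * (1 + t) := by ring
    rw [h] at this; linarith
  have hpl : (1 + t) ≠ 0 := by
    intro h; have : 1 - t ^ 2 = (1 - t) * (1 + t) := by ring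
    rw [h] at this; linarith
  have hV : sasakiVol p q b₀ 0 = 4 * p * q / w := by
    unfold sasakiVol xiProd
    rw [← ht, hw]; congr 1; ring
  have hV0 : sasakiVol p q 0 0 = 4 * p * q := by
    unfold sasakiVol xiProd; simp
  have hS0 : sasakiScal p q 0 0 = 4 * (p + q) := by
    unfold sasakiScal; simp; ring
  have hpq : p + q ≠ 0 := by linarith
  have hS : sasakiScal p q b₀ 0 = 4 * (p + q) * (1 + t ^ 2 * (q - p) / (p + q)) / w := by
    unfold sasakiScal
    have e : w = (1 - t) ^ 2 * (1 + t) ^ 2 := by rw [hw]; ring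
    rw [← ht, e]
    simp only [mul_zero, sub_zero, add_zero]
    field_simp
    ring
  have hR : 25 * (q - p) ^ 2 / (16 * q ^ 2) = w⁻¹ := by
    rw [hw, hu]; field_simp; norm_num
  have hk : 0 < 4 * p * q := by positivity
  have hpow : w ^ ((2 : ℝ) / 3) * w ^ ((1 : ℝ) / 3) = w := by
    rw [← Real.rpow_add hwpos]; norm_num
  unfold sasakiEH
  rw [hV, hV0, hS, hS0, hR, Real.div_rpow hk.le hwpos.le, Real.inv_rpow hwpos.le,
    ← mul_pow, ← ht]
  have hA : 0 < (4 * p * q) ^ ((2 : ℝ) / 3) := Real.rpow_pos_of_pos hk _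
  have hB : 0 < w ^ ((2 : ℝ) / 3) := Real.rpow_pos_of_pos hwpos _
  have hC : 0 < w ^ ((1 : ℝ) / 3) := Real.rpow_pos_of_pos hwpos _
  generalize (4 * p * q) ^ ((2 : ℝ) / 3) = A at *
  generalize w ^ ((2 : ℝ) / 3) = B at *
  generalize w ^ ((1 : ℝ) / 3) = C at *
  generalize 1 + t ^ 2 * (q - p) / (p + q) = D at *
  rw [← hpow]
  field_simp
end

section
/- Let p and q be real numbers with 0 < p and 5p < q, set b₀ = (1/p)·√((q−5p)/(5(q−p))), ξ₀ = (1,0,0) and ξ± = (1, ±b₀, 0). Then EH(ξ₊) = EH(ξ₋) > EH(ξ₀) > 0. (This is the paper's lemma that the two irregular cscS Reeb vector fields ξ± on the join Sasaki manifold over ℙ¹×ℙ¹ have strictly larger Einstein–Hilbert energy than the regular field ξ₀, hence are not detectable by the CR Yamabe energy.) -/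
/-- for `0 < p`, `5p < q` and `b₀ = (1/p)·√((q−5p)/(5(q−p)))`, the two
irregular cscS Reeb fields `ξ± = (1, ±b₀, 0)` have equal Einstein–Hilbert energy,
strictly larger than that of the regular field `ξ₀ = (1,0,0)`, which is positive:
`EH(ξ₊) = EH(ξ₋) > EH(ξ₀) > 0`. -/
theorem stmt4 (p q : ℝ) (hp : 0 < p) (hq : 5 * p < q)
    (b₀ : ℝ) (hb₀ : b₀ = (1 / p) * Real.sqrt ((q - 5 * p) / (5 * (q - p)))) :
    sasakiEH p q b₀ 0 = sasakiEH p q (-b₀) 0 ∧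
    sasakiEH p q 0 0 < sasakiEH p q b₀ 0 ∧
    0 < sasakiEH p q 0 0 := by
  have hq0 : 0 < q := by linarith
  have hqp : 0 < q - p := by linarith
  set t := p * b₀ with ht
  have hts : t ^ 2 = (q - 5 * p) / (5 * (q - p)) := by
    have h1 : t = Real.sqrt ((q - 5 * p) / (5 * (q - p))) := by
      rw [ht, hb₀]; field_simp
    rw [h1, Real.sq_sqrt]
    exact div_nonneg (by linarith) (by linarith)
  obtain ⟨u, hu⟩ : ∃ u, u = 1 - t ^ 2 := ⟨_, rfl⟩
  have hu1 : (q - p) * u = 4 * q / 5 := by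
    rw [hu, hts]; field_simp; ring
  have hupos : 0 < u := by
    by_contra h
    nlinarith [mul_nonneg hqp.le (by linarith : (0:ℝ) ≤ -u)]
  have hule : u ≤ 1 := by nlinarith [sq_nonneg t]
  have hprod : (1 - t) * (1 + t) = u := by rw [hu]; ring
  have hm : 1 - t ≠ 0 := by
    intro h; rw [h] at hprod; linarith
  have hpl : 1 + t ≠ 0 := by
    intro h; rw [h] at hprod; linarith
  have hS0 : sasakiScal p q 0 0 = 4 * (q + p) := by
    unfold sasakiScal; norm_num; ring
  have hV0 : sasakiVol p q 0 0 = 4 * p * q := by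
    unfold sasakiVol xiProd; norm_num
  have hS : sasakiScal p q b₀ 0 = 4 * (6 * q / 5) / u ^ 2 := by
    have h2 : 4 * (6 * q / 5) = 4 * (q * (1 + t ^ 2) + p * (1 - t ^ 2)) := by
      rw [hu] at hu1; linarith
    rw [h2, ← hprod]
    unfold sasakiScal
    simp only [← ht, mul_zero, sub_zero, add_zero]
    field_simp
    ring
  have hV : sasakiVol p q b₀ 0 = 4 * p * q / u ^ 2 := by
    unfold sasakiVol xiProd
    simp only [← ht, mul_zero, sub_zero, add_zero]
    rw [← hprod]; congr 1; ring
  have hW : 0 < (4 * p * q) ^ ((2 : ℝ) / 3) := by positivity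
  refine ⟨?_, ?_, ?_⟩
  · have hs : sasakiScal p q (-b₀) 0 = sasakiScal p q b₀ 0 := by
      unfold sasakiScal
      simp only [mul_neg, mul_zero, sub_zero, add_zero, sub_neg_eq_add, ← sub_eq_add_neg]
      ring
    have hv : sasakiVol p q (-b₀) 0 = sasakiVol p q b₀ 0 := by
      unfold sasakiVol xiProd
      congr 1; ring
    unfold sasakiEH
    rw [hs, hv]
  · unfold sasakiEH
    rw [hS0, hV0, hS, hV, Real.div_rpow (by positivity) (by positivity)]
    have hu2 : u ^ 2 ≤ 1 := by nlinarith
    have hr : u ^ 2 ≤ (u ^ 2) ^ ((2 : ℝ) / 3) :=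
      Real.self_le_rpow_of_le_one (by positivity) hu2 (by norm_num)
    have hr0 : 0 < (u ^ 2) ^ ((2 : ℝ) / 3) := by positivity
    generalize (u ^ 2) ^ ((2 : ℝ) / 3) = r at *
    generalize (4 * p * q) ^ ((2 : ℝ) / 3) = W at *
    have e : 4 * (6 * q / 5) / u ^ 2 / (W / r) = (4 * (6 * q / 5) / W) * (r / u ^ 2) := by
      field_simp
    rw [e]
    have h1 : 1 ≤ r / u ^ 2 := by rwa [le_div_iff₀ (by positivity), one_mul]
    calc 4 * (q + p) / W < 4 * (6 * q / 5) / W := by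
          apply div_lt_div_of_pos_right _ hW; linarith
      _ ≤ _ := le_mul_of_one_le_right (by positivity) h1
  · unfold sasakiEH
    rw [hS0, hV0]
    positivity
end

section
/- Let μ be a probability measure on a measurable space N, let n ≥ 1 be a natural number, and set q = 2 + 2/n. Let u : N → [0,∞) be measurable with ∫_N u^{q} dμ = 1, and let m < 0 and ε ≥ 0 satisfy (m − ε)·∫_N u^{q−2} dμ ≤ m. Then for every real k with q − 2 ≤ k ≤ q one has (|m|/(|m| + ε))^{k/(q−2)} ≤ ∫_N u^{k} dμ ≤ 1, where the integrals are Lebesgue integrals valued in [0,∞]. -/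
open MeasureTheory

lemma lyapunov_aux {N : Type*} [MeasurableSpace N] (μ : Measure N) [IsProbabilityMeasure μ]
    (u : N → ℝ) (hu : Measurable u) (hupos : ∀ x, 0 ≤ u x) (p r : ℝ) (hp : 0 < p) (hpr : p ≤ r) :
    (∫⁻ x, ENNReal.ofReal (u x ^ p) ∂μ) ^ (r / p) ≤ ∫⁻ x, ENNReal.ofReal (u x ^ r) ∂μ := by
  have hr : 0 < r := hp.trans_le hpr
  have key : ∀ s : ℝ, 0 < s →
      ∫⁻ x, ENNReal.ofReal (u x ^ s) ∂μ = eLpNorm' u s μ ^ s := by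
    intro s hs
    rw [← lintegral_rpow_enorm_eq_rpow_eLpNorm' hs]
    refine lintegral_congr fun x => ?_
    rw [Real.enorm_of_nonneg (hupos x), ENNReal.ofReal_rpow_of_nonneg (hupos x) hs.le]
  rw [key p hp, key r hr, ← ENNReal.rpow_mul, mul_div_cancel₀ r hp.ne']
  exact ENNReal.rpow_le_rpow
    (eLpNorm'_le_eLpNorm'_of_exponent_le hp hpr μ hu.aestronglyMeasurable) hr.le

/-- general-exponent form of Lemma 4.5. On a probability space, if
`u ≥ 0` is measurable with `∫ u^q dμ = 1` (`q = 2 + 2/n`, integrals valued in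
`[0,∞]`), `m < 0`, `ε ≥ 0` and `(m − ε)·∫ u^{q−2} dμ ≤ m`, then for every `k` with
`q − 2 ≤ k ≤ q` one has `(|m|/(|m|+ε))^{k/(q−2)} ≤ ∫ u^k dμ ≤ 1`. -/
theorem stmt9 {N : Type*} [MeasurableSpace N] (μ : Measure N) [IsProbabilityMeasure μ]
    (n : ℕ) (hn : 1 ≤ n) (q : ℝ) (hq : q = 2 + 2 / n)
    (u : N → ℝ) (hu : Measurable u) (hupos : ∀ x, 0 ≤ u x)
    (hnorm : ∫⁻ x, ENNReal.ofReal (u x ^ q) ∂μ = 1)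
    (m ε : ℝ) (hm : m < 0) (hε : 0 ≤ ε)
    (h : (m - ε) * (∫⁻ x, ENNReal.ofReal (u x ^ (q - 2)) ∂μ).toReal ≤ m) :
    ∀ k : ℝ, q - 2 ≤ k → k ≤ q →
      ENNReal.ofReal ((|m| / (|m| + ε)) ^ (k / (q - 2)))
          ≤ ∫⁻ x, ENNReal.ofReal (u x ^ k) ∂μ ∧
        ∫⁻ x, ENNReal.ofReal (u x ^ k) ∂μ ≤ 1 := by
  intro k hk1 hk2
  have hn0 : (0 : ℝ) < n := by exact_mod_cast hn
  have hp : 0 < q - 2 := by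
    rw [hq]
    have : (0 : ℝ) < 2 / n := by positivity
    linarith
  have hk : 0 < k := hp.trans_le hk1
  constructor
  · refine le_trans ?_ (lyapunov_aux μ u hu hupos (q - 2) k hp hk1)
    have hc : 0 ≤ |m| / (|m| + ε) := by positivity
    rw [← ENNReal.ofReal_rpow_of_nonneg hc (by positivity)]
    refine ENNReal.rpow_le_rpow ?_ (by positivity)
    refine ENNReal.ofReal_le_of_le_toReal ?_
    rw [abs_of_neg hm, div_le_iff₀ (by linarith)]
    linarith
  · have h1 := lyapunov_aux μ u hu hupos k q hk hk2
    rw [hnorm] at h1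
    have hqk : 0 < q / k := div_pos (by linarith) hk
    by_contra! hlt
    exact absurd h1 (not_le.mpr (ENNReal.one_lt_rpow hlt hqk))
end
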